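/- arXiv:2301.08777 — 2 statements merged into one kernel-verified Lean document; each statement's English description precedes it below -/
import Mathlib

section
/- Let G be a strong tournament of order at least 3. Then for every integer t ≥ 1, the diameter of ILTT^t(G) is at most max{diam(G), 3}. -/
open scoped Classical

noncomputable section

/-- A tournament: a finite directed graph where every pair of distinct nodes
is joined by exactly one arc. -/
structure Tournament where
  V : Type
  [fintypeV : Fintype V]
  [decEqV : DecidableEq V]
  arc : V → V → Prop
  irrefl : ∀ x, ¬ arc x x
  exactlyOne : ∀ x y, x ≠ y → (arc x y ↔ ¬ arc y x)

attribute [instance] Tournament.fintypeV Tournament.decEqV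

namespace Tournament

/-- The ILTT extension: vertices are `V ⊕ V` where `Sum.inl x` is the original
node `x` and `Sum.inr x` is its clone `x'`. -/
def ILTT (T : Tournament) : Tournament where
  V := T.V ⊕ T.V
  arc := fun u v =>
    match u, v with
    | Sum.inl x, Sum.inl y => T.arc x y
    | Sum.inl x, Sum.inr y => T.arc x y
    | Sum.inr x, Sum.inl y => T.arc x y ∨ x = y
    | Sum.inr x, Sum.inr y => T.arc x y
  irrefl := by rintro (x | x) h <;> exact T.irrefl x h
  exactlyOne := by
    rintro (x | x) (y | y) hxy
    · exact T.exactlyOne x y (fun h => hxy (by rw [h]))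
    · by_cases h : x = y
      · subst h; simp [T.irrefl x]
      · have := T.exactlyOne x y h
        simp only [not_or]
        constructor
        · intro ha; exact ⟨this.mp ha, fun h' => h h'.symm⟩
        · intro ha; exact this.mpr ha.1
    · by_cases h : x = y
      · subst h; simp [T.irrefl x]
      · have := T.exactlyOne x y h
        constructor
        · rintro (ha | ha)
          · exact this.mp ha
          · exact absurd ha h
        · intro ha; exact Or.inl (this.mpr ha)
    · exact T.exactlyOne x y (fun h => hxy (by rw [h]))

/-- The dual ILTT extension: identical to `ILTT` except the arcs between
clones are reversed. -/
def ILTTd (T : Tournament) : Tournament where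
  V := T.V ⊕ T.V
  arc := fun u v =>
    match u, v with
    | Sum.inl x, Sum.inl y => T.arc x y
    | Sum.inl x, Sum.inr y => T.arc x y
    | Sum.inr x, Sum.inl y => T.arc x y ∨ x = y
    | Sum.inr x, Sum.inr y => T.arc y x
  irrefl := by rintro (x | x) h <;> exact T.irrefl x h
  exactlyOne := by
    rintro (x | x) (y | y) hxy
    · exact T.exactlyOne x y (fun h => hxy (by rw [h]))
    · by_cases h : x = y
      · subst h; simp [T.irrefl x]
      · have := T.exactlyOne x y h
        simp only [not_or]
        constructor
        · intro ha; exact ⟨this.mp ha, fun h' => h h'.symm⟩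
        · intro ha; exact this.mpr ha.1
    · by_cases h : x = y
      · subst h; simp [T.irrefl x]
      · have := T.exactlyOne x y h
        constructor
        · rintro (ha | ha)
          · exact this.mp ha
          · exact absurd ha h
        · intro ha; exact Or.inl (this.mpr ha)
    · exact T.exactlyOne y x (fun h => hxy (by rw [h]))

/-- A tournament is strong if, for every ordered pair of nodes, there is a
directed path from the first to the second. -/
def Strong (T : Tournament) : Prop := ∀ u v : T.V, Relation.ReflTransGen T.arc u v

/-- `HasWalk T u v n` : there is a directed walk of length `n` from `u` to `v`. -/
def HasWalk (T : Tournament) (u v : T.V) (n : ℕ) : Prop :=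
  ∃ f : Fin (n + 1) → T.V, f 0 = u ∧ f (Fin.last n) = v ∧
    ∀ i : Fin n, T.arc (f i.castSucc) (f i.succ)

/-- The distance from `u` to `v`: the length of a shortest directed path. -/
def dist (T : Tournament) (u v : T.V) : ℕ := sInf {n | HasWalk T u v n}

/-- The diameter: the maximum distance over ordered pairs of distinct nodes. -/
def diam (T : Tournament) : ℕ :=
  (Finset.univ.filter (fun p : T.V × T.V => p.1 ≠ p.2)).sup
    (fun p => T.dist p.1 p.2)

/-- The Wiener index: the sum of distances over ordered pairs of distinct nodes. -/
def wiener (T : Tournament) : ℕ :=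
  ∑ p ∈ Finset.univ.filter (fun p : T.V × T.V => p.1 ≠ p.2), T.dist p.1 p.2

/-- The average distance `L(T) = W(T)/(m(m-1))` where `m` is the order. -/
def avgDist (T : Tournament) : ℝ :=
  (T.wiener : ℝ) / ((Fintype.card T.V : ℝ) * ((Fintype.card T.V : ℝ) - 1))

/-- `J` is a subtournament of `K`. -/
def IsSubtournament (J K : Tournament) : Prop :=
  ∃ f : J.V → K.V, Function.Injective f ∧ ∀ u v : J.V, J.arc u v ↔ K.arc (f u) (f v)

/-- The linear order on `t` nodes. -/
def linearTournament (t : ℕ) : Tournament where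
  V := Fin t
  arc := fun i j => i < j
  irrefl := fun i => lt_irrefl i
  exactlyOne := fun i j h => by
    rw [not_lt]
    exact ⟨le_of_lt, fun hle => hle.lt_of_ne h⟩

/-- A tournament is Hamiltonian if it has a directed cycle through all nodes. -/
def IsHamiltonian (T : Tournament) : Prop :=
  ∃ f : ZMod (Fintype.card T.V) ≃ T.V, ∀ i, T.arc (f i) (f (i + 1))

/-- `S` is an in-dominating set. -/
def InDom (T : Tournament) (S : Finset T.V) : Prop :=
  ∀ u, u ∉ S → ∃ v ∈ S, T.arc u v

/-- `S` is an out-dominating set. -/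
def OutDom (T : Tournament) (S : Finset T.V) : Prop :=
  ∀ u, u ∉ S → ∃ v ∈ S, T.arc v u

/-- The in-domination number. -/
def inDomNum (T : Tournament) : ℕ := sInf {n | ∃ S : Finset T.V, T.InDom S ∧ S.card = n}

/-- The out-domination number. -/
def outDomNum (T : Tournament) : ℕ := sInf {n | ∃ S : Finset T.V, T.OutDom S ∧ S.card = n}

end Tournament

open Tournament

/-!
Mapping each clone to its original turns every arc of `G` into arcs between all preimages of its
ends, so a walk of positive length in `G` lifts to a walk of the same length between any
preimages of its ends. Two nodes of `ILTT(G)` may have the same original, so one also needs closed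
walks in `G`: every node of a nontrivial strong tournament lies on a 3-cycle, which is where the
constant 3 comes from. Hence the property "any two nodes, equal or not, are joined by a walk of
positive length at most `max (diam G) 3`" holds for `G` and is inherited by every iterate.
-/

namespace Tournament

variable {S T : Tournament}

section Walk

variable {u v w : T.V} {m n : ℕ}

theorem hasWalk_zero_iff : T.HasWalk u v 0 ↔ u = v :=
  ⟨fun ⟨_, hu, hv, _⟩ => hu.symm.trans hv, fun huv => ⟨fun _ => u, rfl, huv, fun i => i.elim0⟩⟩

theorem hasWalk_succ_iff : T.HasWalk u v (n + 1) ↔ ∃ w, T.arc u w ∧ T.HasWalk w v n := by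
  constructor
  · rintro ⟨f, rfl, rfl, hf⟩
    exact ⟨f 1, hf 0, Fin.tail f, rfl, rfl, fun i => hf i.succ⟩
  · rintro ⟨_, huw, f, rfl, rfl, hf⟩
    exact ⟨Fin.cons u f, rfl, rfl, Fin.cases huw hf⟩

theorem hasWalk_one_iff : T.HasWalk u v 1 ↔ T.arc u v := by
  simp only [hasWalk_succ_iff, hasWalk_zero_iff, exists_eq_right]

theorem HasWalk.cons (huw : T.arc u w) (h : T.HasWalk w v n) : T.HasWalk u v (n + 1) :=
  hasWalk_succ_iff.mpr ⟨w, huw, h⟩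

theorem exists_hasWalk_of_reflTransGen (h : Relation.ReflTransGen T.arc u v) :
    ∃ n, T.HasWalk u v n := by
  induction h using Relation.ReflTransGen.head_induction_on with
  | refl => exact ⟨0, hasWalk_zero_iff.mpr rfl⟩
  | head huw _ ih => exact ih.imp' (· + 1) fun _ hw => hw.cons huw

theorem HasWalk.dist_le (h : T.HasWalk u v n) : T.dist u v ≤ n :=
  Nat.sInf_le h

theorem Strong.hasWalk_dist (hT : T.Strong) (u v : T.V) : T.HasWalk u v (T.dist u v) :=
  Nat.sInf_mem (exists_hasWalk_of_reflTransGen (hT u v))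

theorem Strong.dist_pos (hT : T.Strong) (huv : u ≠ v) : 0 < T.dist u v :=
  Nat.pos_of_ne_zero fun h0 => huv <| hasWalk_zero_iff.mp (h0 ▸ hT.hasWalk_dist u v)

theorem diam_le_iff : T.diam ≤ m ↔ ∀ u v : T.V, u ≠ v → T.dist u v ≤ m := by
  simp only [diam, Finset.sup_le_iff, Finset.mem_filter, Finset.mem_univ, true_and, Prod.forall]

theorem dist_le_diam (huv : u ≠ v) : T.dist u v ≤ T.diam :=
  diam_le_iff.mp le_rfl u v huv

end Walk

section ThreeCycle

variable {x y z : T.V}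

theorem arc_asymm (hxy : T.arc x y) : ¬ T.arc y x := fun hyx =>
  (T.exactlyOne x y fun h => T.irrefl y (h ▸ hxy)).mp hxy hyx

theorem arc_or_arc_of_ne (hxy : x ≠ y) : T.arc x y ∨ T.arc y x :=
  or_iff_not_imp_right.mpr (T.exactlyOne x y hxy).mpr

theorem arc_or_arc_of_arc_of_arc (hxy : T.arc x y) (hyz : T.arc y z) : T.arc x z ∨ T.arc z x :=
  arc_or_arc_of_ne fun hxz => arc_asymm hxy (hxz ▸ hyz)

theorem arc_or_exists_threeCycle_of_transGen (h : Relation.TransGen T.arc x y) :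
    T.arc x y ∨ ∃ a b, T.arc x a ∧ T.arc a b ∧ T.arc b x := by
  induction h with
  | single hxy => exact Or.inl hxy
  | @tail y z _ hyz ih =>
    rcases ih with hxy | hcycle
    · exact (arc_or_arc_of_arc_of_arc hxy hyz).imp_right fun hzx => ⟨y, z, hxy, hyz, hzx⟩
    · exact Or.inr hcycle

theorem exists_threeCycle_of_transGen_self (h : Relation.TransGen T.arc x x) :
    ∃ a b, T.arc x a ∧ T.arc a b ∧ T.arc b x :=
  (arc_or_exists_threeCycle_of_transGen h).resolve_left (T.irrefl x)

theorem Strong.transGen_self [Nontrivial T.V] (hT : T.Strong) (x : T.V) :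
    Relation.TransGen T.arc x x := by
  obtain ⟨y, hyx⟩ := exists_ne x
  have hxy : Relation.TransGen T.arc x y :=
    (Relation.reflTransGen_iff_eq_or_transGen.mp (hT x y)).resolve_left hyx
  exact hxy.trans_left (hT y x)

theorem Strong.hasWalk_self_three [Nontrivial T.V] (hT : T.Strong) (x : T.V) :
    T.HasWalk x x 3 := by
  obtain ⟨a, b, hxa, hab, hbx⟩ := exists_threeCycle_of_transGen_self (hT.transGen_self x)
  exact ((hasWalk_one_iff.mpr hbx).cons hab).cons hxa

end ThreeCycle

section WalkBounded

variable {m : ℕ}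

/-- Any two nodes are joined by a walk of positive length at most `m`. Unlike a bound on the
diameter, this includes closed walks from each node to itself, which is what makes the property
pass to `ILTT`. -/
def WalkBounded (T : Tournament) (m : ℕ) : Prop :=
  ∀ u v : T.V, ∃ n, 1 ≤ n ∧ n ≤ m ∧ T.HasWalk u v n

theorem WalkBounded.diam_le (h : T.WalkBounded m) : T.diam ≤ m :=
  diam_le_iff.mpr fun u v _ =>
    let ⟨_, _, hnm, hw⟩ := h u v
    hw.dist_le.trans hnm

theorem Strong.walkBounded [Nontrivial T.V] (hT : T.Strong) :
    T.WalkBounded (max T.diam 3) := by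
  intro u v
  rcases eq_or_ne u v with rfl | huv
  · exact ⟨3, by norm_num, le_max_right _ _, hT.hasWalk_self_three u⟩
  · exact ⟨T.dist u v, hT.dist_pos huv, le_max_of_le_left (dist_le_diam huv), hT.hasWalk_dist u v⟩

end WalkBounded

section Lift

variable {π : S.V → T.V} {m n : ℕ}

theorem HasWalk.lift (hπ : Function.Surjective π)
    (harc : ∀ a b, T.arc (π a) (π b) → S.arc a b) {a b : S.V} (hn : 1 ≤ n)
    (h : T.HasWalk (π a) (π b) n) : S.HasWalk a b n := by
  induction n, hn using Nat.le_induction generalizing a with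
  | base => exact hasWalk_one_iff.mpr (harc a b (hasWalk_one_iff.mp h))
  | succ n _ ih =>
    obtain ⟨w, haw, hwb⟩ := hasWalk_succ_iff.mp h
    obtain ⟨c, rfl⟩ := hπ w
    exact (ih hwb).cons (harc a c haw)

theorem WalkBounded.lift (hπ : Function.Surjective π)
    (harc : ∀ a b, T.arc (π a) (π b) → S.arc a b) (h : T.WalkBounded m) : S.WalkBounded m :=
  fun a b =>
    let ⟨n, hn, hnm, hw⟩ := h (π a) (π b)
    ⟨n, hn, hnm, hw.lift hπ harc hn⟩

end Lift

section ILTT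

variable {m : ℕ}

/-- The node of `T` that a node of `T.ILTT` comes from: an original node is sent to itself, a
clone to the node it copies. Walks of `T` are lifted to `T.ILTT` along this map. -/
def original (T : Tournament) : T.ILTT.V → T.V := Sum.elim id id

theorem original_surjective (T : Tournament) : Function.Surjective T.original :=
  fun x => ⟨Sum.inl x, rfl⟩

theorem ILTT_arc_of_arc_original {a b : T.ILTT.V} (h : T.arc (T.original a) (T.original b)) :
    T.ILTT.arc a b := by
  rcases a with a | a <;> rcases b with b | b
  · exact h
  · exact h
  · exact Or.inl h
  · exact h

theorem WalkBounded.ILTT (h : T.WalkBounded m) : T.ILTT.WalkBounded m :=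
  h.lift T.original_surjective fun _ _ => ILTT_arc_of_arc_original

theorem WalkBounded.iterate_ILTT (h : T.WalkBounded m) (t : ℕ) :
    (Tournament.ILTT^[t] T).WalkBounded m :=
  Function.Iterate.rec (fun T : Tournament => T.WalkBounded m) h (fun _ => WalkBounded.ILTT) t

end ILTT

end Tournament

/-- For a strong tournament `G` of order at least 3 and `t ≥ 1`,
`diam(ILTT^t(G)) ≤ max (diam G) 3`. -/
theorem stmt4 (G : Tournament) (hcard : 3 ≤ Fintype.card G.V) (hG : G.Strong) :
    ∀ t : ℕ, 1 ≤ t → (Tournament.ILTT^[t] G).diam ≤ max G.diam 3 := by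
  intro t _
  have : Nontrivial G.V := Fintype.one_lt_card_iff_nontrivial.mp (by omega)
  exact (hG.walkBounded.iterate_ILTT t).diam_le
end
end

section
/- Let K be a tournament and let H be a subtournament of K. If J is a tournament on the same node set as H obtained from H by reversing the orientation of exactly one arc, then J is isomorphic to a subtournament of ILTT_d(K). -/
open scoped Classical

noncomputable section

open Tournament

/-- `J` is obtained from `H` (a tournament on the same node set, identified via
the equivalence `e`) by reversing the orientation of exactly one arc: there is a
pair `u, v` with `(u,v)` an arc of `H` and `(v,u)` an arc of `J`, and all other
arcs agree. -/
def DiffersByOneArc (H J : Tournament) : Prop :=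
  ∃ e : H.V ≃ J.V, ∃ u v : H.V, H.arc u v ∧ J.arc (e v) (e u) ∧
    ∀ a b : H.V, ¬((a = u ∧ b = v) ∨ (a = v ∧ b = u)) →
      (H.arc a b ↔ J.arc (e a) (e b))

/-!
In the dual extension the arcs between clones run opposite to those of the tournament, while an
arc between a node and the clone of another keeps its direction. Hence replacing the nodes of any
set `S` by their clones reverses exactly the arcs inside `S`, and reversing a single arc is the
case where `S` consists of its two ends.
-/

namespace Tournament

theorem arc_asymm_s12 {T : Tournament} {x y : T.V} (h : T.arc x y) : ¬ T.arc y x := by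
  have hxy : x ≠ y := by
    rintro rfl
    exact T.irrefl x h
  exact (T.exactlyOne x y hxy).mp h

theorem IsSubtournament.trans {J H K : Tournament} (hJH : J.IsSubtournament H)
    (hHK : H.IsSubtournament K) : J.IsSubtournament K := by
  obtain ⟨g, hg, hgarc⟩ := hJH
  obtain ⟨f, hf, hfarc⟩ := hHK
  exact ⟨f ∘ g, hf.comp hg, fun x y => (hgarc x y).trans (hfarc (g x) (g y))⟩

section ILTTd

variable (T : Tournament) (x y : T.V)

@[simp]
theorem ILTTd_arc_inl_inl : T.ILTTd.arc (Sum.inl x) (Sum.inl y) ↔ T.arc x y := Iff.rfl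

@[simp]
theorem ILTTd_arc_inl_inr : T.ILTTd.arc (Sum.inl x) (Sum.inr y) ↔ T.arc x y := Iff.rfl

@[simp]
theorem ILTTd_arc_inr_inl : T.ILTTd.arc (Sum.inr x) (Sum.inl y) ↔ T.arc x y ∨ x = y := Iff.rfl

@[simp]
theorem ILTTd_arc_inr_inr : T.ILTTd.arc (Sum.inr x) (Sum.inr y) ↔ T.arc y x := Iff.rfl

end ILTTd

theorem IsSubtournament.ILTTd {H K : Tournament} (hHK : H.IsSubtournament K) :
    H.ILTTd.IsSubtournament K.ILTTd := by
  obtain ⟨f, hf, hfarc⟩ := hHK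
  refine ⟨Sum.map f f, hf.sumMap hf, ?_⟩
  rintro (x | x) (y | y) <;> simp [hfarc, hf.eq_iff]

/-- The tournament obtained from `T` by reversing every arc with both ends in `S`. -/
def reverseOn (T : Tournament) (S : Set T.V) : Tournament where
  V := T.V
  arc x y := if x ∈ S ∧ y ∈ S then T.arc y x else T.arc x y
  irrefl x := by simp [T.irrefl x]
  exactlyOne x y hxy := by
    simp only [and_comm (a := y ∈ S)]
    split_ifs
    · exact T.exactlyOne y x hxy.symm
    · exact T.exactlyOne x y hxy

section reverseOn

variable {T : Tournament} {S : Set T.V} {x y : T.V}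

theorem reverseOn_arc_of_mem (hx : x ∈ S) (hy : y ∈ S) :
    (T.reverseOn S).arc x y ↔ T.arc y x :=
  iff_of_eq (if_pos ⟨hx, hy⟩)

theorem reverseOn_arc_of_not_mem_and_mem (h : ¬ (x ∈ S ∧ y ∈ S)) :
    (T.reverseOn S).arc x y ↔ T.arc x y :=
  iff_of_eq (if_neg h)

end reverseOn

section cloneOn

variable (T : Tournament) (S : Set T.V)

/-- The map into the dual extension that sends each node of `S` to its clone and fixes every other
node; it embeds the tournament obtained from `T` by reversing the arcs inside `S`. -/
def cloneOn (x : T.V) : T.ILTTd.V := if x ∈ S then Sum.inr x else Sum.inl x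

theorem cloneOn_injective : Function.Injective (T.cloneOn S) := by
  have h_forget : Function.LeftInverse (Sum.elim id id) (T.cloneOn S) := by
    intro x
    by_cases hx : x ∈ S <;> simp [cloneOn, hx]
  exact h_forget.injective

theorem ILTTd_arc_cloneOn (x y : T.V) :
    T.ILTTd.arc (T.cloneOn S x) (T.cloneOn S y) ↔ (T.reverseOn S).arc x y := by
  by_cases hx : x ∈ S <;> by_cases hy : y ∈ S
  · simp [cloneOn, hx, hy, reverseOn_arc_of_mem]
  · have hxy : x ≠ y := ne_of_mem_of_not_mem hx hy
    simp [cloneOn, hx, hy, hxy, reverseOn_arc_of_not_mem_and_mem]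
  · simp [cloneOn, hx, hy, reverseOn_arc_of_not_mem_and_mem]
  · simp [cloneOn, hx, hy, reverseOn_arc_of_not_mem_and_mem]

theorem reverseOn_isSubtournament_ILTTd : (T.reverseOn S).IsSubtournament T.ILTTd :=
  ⟨T.cloneOn S, T.cloneOn_injective S, fun x y => (T.ILTTd_arc_cloneOn S x y).symm⟩

end cloneOn

end Tournament

theorem DiffersByOneArc.exists_isSubtournament_reverseOn_pair {H J : Tournament}
    (hHJ : DiffersByOneArc H J) : ∃ u v : H.V, J.IsSubtournament (H.reverseOn {u, v}) := by
  obtain ⟨e, u, v, huv, hvu, hagree⟩ := hHJ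
  refine ⟨u, v, e.symm, e.symm.injective, ?_⟩
  suffices harc : ∀ a b, J.arc (e a) (e b) ↔ (H.reverseOn {u, v}).arc a b by
    intro x y
    simpa only [e.apply_symm_apply] using harc (e.symm x) (e.symm y)
  intro a b
  by_cases hab : a ∈ ({u, v} : Set H.V) ∧ b ∈ ({u, v} : Set H.V)
  · rw [reverseOn_arc_of_mem hab.1 hab.2]
    obtain ⟨rfl | rfl, rfl | rfl⟩ := hab
    · exact iff_of_false (J.irrefl _) (H.irrefl _)
    · exact iff_of_false (arc_asymm_s12 hvu) (arc_asymm_s12 huv)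
    · exact iff_of_true hvu huv
    · exact iff_of_false (J.irrefl _) (H.irrefl _)
  · rw [reverseOn_arc_of_not_mem_and_mem hab]
    have h_other_pair : ¬ ((a = u ∧ b = v) ∨ (a = v ∧ b = u)) := by
      rintro (⟨rfl, rfl⟩ | ⟨rfl, rfl⟩) <;> simp at hab
    exact (hagree a b h_other_pair).symm

theorem stmt12_general (K H J : Tournament) (hHK : H.IsSubtournament K) (S : Set H.V)
    (hJ : J.IsSubtournament (H.reverseOn S)) : J.IsSubtournament K.ILTTd :=
  (hJ.trans (H.reverseOn_isSubtournament_ILTTd S)).trans hHK.ILTTd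

/-- If `H` is a subtournament of `K` and `J` is obtained from `H`
by reversing exactly one arc, then `J` is isomorphic to a subtournament of
`ILTT_d(K)`. -/
theorem stmt12 (K H J : Tournament) (hHK : H.IsSubtournament K)
    (hHJ : DiffersByOneArc H J) : J.IsSubtournament K.ILTTd := by
  obtain ⟨u, v, hJ⟩ := hHJ.exists_isSubtournament_reverseOn_pair
  exact stmt12_general K H J hHK {u, v} hJ
end
end
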